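/- Let X and Y be real Banach spaces, let k ≥ 1 be an integer and let P : X → Y be a continuous k-homogeneous polynomial. The following assertions are equivalent: (A) for every w.u.C. series ∑ xₙ in X, if for every bounded sequence (aₙ) in c₀ the set {P(∑_{i=1}^∞ aₙ(i)·x_i) : n ∈ ℕ} is relatively weakly compact in Y, then ∑ xₙ is unconditionally convergent; (B) for every w.u.C. series ∑ xₙ in X, if for every bounded sequence (aₙ) in c₀ the set {P(∑_{i=1}^∞ aₙ(i)·x_i) : n ∈ ℕ} is relatively (norm) compact in Y, then ∑ xₙ is unconditionally convergent; (C) for every sequence (xₙ) in X equivalent to the c₀-basis there is a bounded sequence (aₙ) in c₀ such that the set {P(∑_{i=1}^∞ aₙ(i)·x_i) : n ∈ ℕ} is not relatively weakly compact; (D) for every sequence (xₙ) in X equivalent to the c₀-basis there is a bounded sequence (aₙ) in c₀ such that the set {P(∑_{i=1}^∞ aₙ(i)·x_i) : n ∈ ℕ} is not relatively (norm) compact; (E) for every real Banach space Z and every bounded linear operator T : Z → X, if the polynomial P∘T is unconditionally converging then T is an unconditionally converging operator; (F) for every bounded linear operator T : c₀ → X, if the polynomial P∘T is compact then T is a compact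 operator; (G) for every closed subspace M ⊆ X containing a subspace isomorphic to c₀, the restriction of P to M is not an unconditionally converging polynomial; (H) for every closed subspace M ⊆ X isomorphic to c₀, the restriction of P to M is not a compact polynomial. -/

import Mathlib

open Filter Topology Metric

noncomputable section

/-- The Banach space `c₀` of real sequences converging to zero, with the sup norm. -/
abbrev c0 : Type := ZeroAtInftyContinuousMap ℕ ℝ

/-- The unit vector basis of `c₀`. -/
def e (n : ℕ) : c0 :=
  { toFun := fun i => if i = n then (1 : ℝ) else 0
    continuous_toFun := continuous_of_discreteTopology
    zero_at_infty' := by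
      rw [Filter.cocompact_eq_cofinite]
      refine tendsto_const_nhds.congr' ?_
      have h : {n}ᶜ ∈ (Filter.cofinite : Filter ℕ) := by simp [Filter.cofinite]
      filter_upwards [h] with i hi
      simp only [Set.mem_compl_iff, Set.mem_singleton_iff] at hi
      simp [hi] }

/-- A series `∑ xₙ` is weakly unconditionally Cauchy (w.u.C.) if `∑ |φ (xₙ)| < ∞` for every
continuous linear functional `φ`. -/
def WUC {X : Type*} [NormedAddCommGroup X] [NormedSpace ℝ X] (x : ℕ → X) : Prop :=
  ∀ φ : X →L[ℝ] ℝ, Summable fun n => |φ (x n)|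

/-- A sequence is equivalent to the unit vector basis of `c₀`: there are `0 < c ≤ C` with
`c · maxᵢ |aᵢ| ≤ ‖∑ aᵢ xᵢ‖ ≤ C · maxᵢ |aᵢ|` for all finite scalar families. -/
def IsEquivC0Basis {X : Type*} [NormedAddCommGroup X] [NormedSpace ℝ X] (x : ℕ → X) : Prop :=
  ∃ c C : ℝ, 0 < c ∧ c ≤ C ∧ ∀ (n : ℕ) (a : ℕ → ℝ),
    c * (⨆ i : Fin n, |a i|) ≤ ‖∑ i ∈ Finset.range n, a i • x i‖ ∧
    ‖∑ i ∈ Finset.range n, a i • x i‖ ≤ C * (⨆ i : Fin n, |a i|)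

/-- A map (polynomial) is unconditionally converging if for every w.u.C. series `∑ xₙ` the
sequence of values at the partial sums converges in norm. -/
def UCPoly {X Y : Type*} [NormedAddCommGroup X] [NormedSpace ℝ X]
    [NormedAddCommGroup Y] [NormedSpace ℝ Y] (P : X → Y) : Prop :=
  ∀ x : ℕ → X, WUC x →
    ∃ L : Y, Tendsto (fun n => P (∑ i ∈ Finset.range n, x i)) atTop (𝓝 L)

/-- An operator is unconditionally converging if it maps w.u.C. series to unconditionally
convergent series. -/
def UCOp {X Y : Type*} [NormedAddCommGroup X] [NormedSpace ℝ X]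
    [NormedAddCommGroup Y] [NormedSpace ℝ Y] (T : X → Y) : Prop :=
  ∀ x : ℕ → X, WUC x → Summable fun n => T (x n)

/-- A map (polynomial or operator) is compact if the image of the closed unit ball is
relatively norm compact. -/
def CompactMap {X Y : Type*} [NormedAddCommGroup X] [NormedSpace ℝ X]
    [NormedAddCommGroup Y] [NormedSpace ℝ Y] (P : X → Y) : Prop :=
  IsCompact (closure (P '' Metric.closedBall 0 1))

/-- A set is relatively weakly compact if its closure in the weak topology is compact. -/
def RelWeakCompact {Y : Type*} [NormedAddCommGroup Y] [NormedSpace ℝ Y] (s : Set Y) : Prop :=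
  IsCompact (closure ((toWeakSpace ℝ Y) '' s))

/-- A WUC-set is the image of the closed unit ball of `c₀` under a bounded operator. -/
def IsWUCSet {X : Type*} [NormedAddCommGroup X] [NormedSpace ℝ X] (s : Set X) : Prop :=
  ∃ T : c0 →L[ℝ] X, s = ⇑T '' Metric.closedBall 0 1

/-!
On `c₀` weak compactness is already norm compactness for polynomials. Suppose `Q` maps the partial
sums of w.u.C. series to relatively weakly compact sets. By induction on the degree, which forward
differences lower, `Q` is continuous along bounded coordinatewise convergent sequences: the
induction hypothesis makes `Q - Q 0` almost additive along a sparse subsequence of a null sequence,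
so its values form a w.u.C. series with relatively weakly compact partial sums, and such a series
has null terms because it contains no copy of `c₀` (Bessaga–Pełczyński). Bounded sequences in `c₀`
having coordinatewise convergent subsequences, `Q` is then compact and unconditionally converging.

Since a w.u.C. series that does not converge has blocks spanning a copy of `c₀`, every assertion of
the theorem says that `P` does not have these properties on any copy of `c₀` in `X`.
-/

namespace c0

theorem norm_le_iff {a : c0} {C : ℝ} (hC : 0 ≤ C) : ‖a‖ ≤ C ↔ ∀ t, |a t| ≤ C := by
  rw [← ZeroAtInftyContinuousMap.norm_toBCF_eq_norm]
  exact BoundedContinuousFunction.norm_le hC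

theorem abs_apply_le_norm (a : c0) (t : ℕ) : |a t| ≤ ‖a‖ :=
  (norm_le_iff (norm_nonneg a)).1 le_rfl t

/-- The `t`-th coordinate functional on `c₀`. -/
def coord (t : ℕ) : c0 →L[ℝ] ℝ :=
  LinearMap.mkContinuous
    { toFun := fun a => a t
      map_add' := fun _ _ => rfl
      map_smul' := fun _ _ => rfl } 1 fun a => (abs_apply_le_norm a t).trans_eq (one_mul _).symm

@[simp]
theorem coord_apply (t : ℕ) (a : c0) : coord t a = a t := rfl

theorem sum_apply {ι : Type*} (F : Finset ι) (z : ι → c0) (t : ℕ) :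
    (∑ i ∈ F, z i) t = ∑ i ∈ F, z i t :=
  map_sum (coord t) z F

theorem tendsto_zero (a : c0) : Tendsto a atTop (𝓝 0) := by
  have h := ZeroAtInftyContinuousMapClass.zero_at_infty a
  rwa [cocompact_eq_cofinite, Nat.cofinite_eq_atTop] at h

theorem e_apply (n t : ℕ) : e n t = if t = n then 1 else 0 := rfl

theorem sum_smul_e_apply (F : Finset ℕ) (l : ℕ → ℝ) (t : ℕ) :
    (∑ i ∈ F, l i • e i) t = if t ∈ F then l t else 0 := by
  simp [sum_apply, e_apply]

theorem norm_sum_smul_e_le {F : Finset ℕ} {l : ℕ → ℝ} {C : ℝ} (hC : 0 ≤ C)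
    (hl : ∀ i ∈ F, |l i| ≤ C) : ‖∑ i ∈ F, l i • e i‖ ≤ C := by
  refine (norm_le_iff hC).2 fun t => ?_
  rw [sum_smul_e_apply]
  split_ifs with ht
  · exact hl t ht
  · simpa using hC

theorem norm_sum_e_le_one (F : Finset ℕ) : ‖∑ i ∈ F, e i‖ ≤ 1 := by
  simpa using norm_sum_smul_e_le (F := F) (l := 1) zero_le_one (by simp)

end c0

theorem sum_abs_le_two_mul {ι : Type*} {f : ι → ℝ} {C : ℝ} {F : Finset ι}
    (h : ∀ G ⊆ F, |∑ i ∈ G, f i| ≤ C) : ∑ i ∈ F, |f i| ≤ 2 * C := by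
  have hpos : ∑ i ∈ F with 0 ≤ f i, |f i| ≤ C := by
    rw [Finset.sum_congr rfl fun i hi => abs_of_nonneg (Finset.mem_filter.1 hi).2]
    exact (le_abs_self _).trans (h _ (F.filter_subset _))
  have hneg : ∑ i ∈ F with ¬ 0 ≤ f i, |f i| ≤ C := by
    rw [Finset.sum_congr rfl fun i hi => abs_of_neg (not_le.1 (Finset.mem_filter.1 hi).2),
      Finset.sum_neg_distrib]
    exact (neg_le_abs _).trans (h _ (F.filter_subset _))
  linarith [Finset.sum_filter_add_sum_filter_not F (fun i => 0 ≤ f i) fun i => |f i|]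

section BoundedSums

variable {ι X : Type*} [NormedAddCommGroup X] [NormedSpace ℝ X] {x : ι → X} {C : ℝ}

theorem sum_abs_dual_le (hx : ∀ F : Finset ι, ‖∑ i ∈ F, x i‖ ≤ C) (φ : X →L[ℝ] ℝ) (F : Finset ι) :
    ∑ i ∈ F, |φ (x i)| ≤ 2 * (C * ‖φ‖) := by
  refine sum_abs_le_two_mul fun G _ => ?_
  rw [← map_sum, mul_comm]
  exact φ.le_opNorm_of_le (hx G)

theorem norm_sum_smul_le (hx : ∀ F : Finset ι, ‖∑ i ∈ F, x i‖ ≤ C) {F : Finset ι} {a : ι → ℝ}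
    {M : ℝ} (hM : 0 ≤ M) (ha : ∀ i ∈ F, |a i| ≤ M) : ‖∑ i ∈ F, a i • x i‖ ≤ 2 * C * M := by
  have hC : 0 ≤ C := (norm_nonneg _).trans (hx ∅)
  refine NormedSpace.norm_le_dual_bound ℝ _ (by positivity) fun φ => ?_
  calc ‖φ (∑ i ∈ F, a i • x i)‖ = |∑ i ∈ F, a i * φ (x i)| := by
        simp only [map_sum, map_smul, smul_eq_mul, Real.norm_eq_abs]
    _ ≤ ∑ i ∈ F, M * |φ (x i)| := by
        refine (Finset.abs_sum_le_sum_abs _ _).trans (Finset.sum_le_sum fun i hi => ?_)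
        rw [abs_mul]
        gcongr
        exact ha i hi
    _ ≤ M * (2 * (C * ‖φ‖)) := by
        rw [← Finset.mul_sum]
        gcongr
        exact sum_abs_dual_le hx φ F
    _ = 2 * C * M * ‖φ‖ := by ring

end BoundedSums

section WUC

variable {X X' : Type*} [NormedAddCommGroup X] [NormedSpace ℝ X]
  [NormedAddCommGroup X'] [NormedSpace ℝ X'] {x : ℕ → X}

theorem WUC.exists_norm_sum_le (hx : WUC x) : ∃ C, ∀ F : Finset ℕ, ‖∑ i ∈ F, x i‖ ≤ C := by
  obtain ⟨C, hC⟩ := banach_steinhaus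
    (g := fun F : Finset ℕ => NormedSpace.inclusionInDoubleDual ℝ X (∑ i ∈ F, x i))
    fun φ => ⟨∑' i, |φ (x i)|, fun F => by
      rw [NormedSpace.dual_def, map_sum]
      exact (Finset.abs_sum_le_sum_abs _ _).trans ((hx φ).sum_le_tsum F fun _ _ => abs_nonneg _)⟩
  exact ⟨C, fun F => ((NormedSpace.inclusionInDoubleDualLi ℝ).norm_map _).symm.trans_le (hC F)⟩

theorem wuc_of_norm_sum_le {C : ℝ} (hx : ∀ F : Finset ℕ, ‖∑ i ∈ F, x i‖ ≤ C) : WUC x := fun φ =>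
  summable_of_sum_le (fun _ => abs_nonneg _) (sum_abs_dual_le hx φ)

theorem WUC.map (hx : WUC x) (T : X →L[ℝ] X') : WUC fun n => T (x n) :=
  fun φ => hx (φ.comp T)

theorem WUC.comp_injective (hx : WUC x) {f : ℕ → ℕ} (hf : Function.Injective f) :
    WUC (x ∘ f) :=
  fun φ => (hx φ).comp_injective hf

theorem WUC.sum_of_pairwise_disjoint (hx : WUC x) {F : ℕ → Finset ℕ}
    (hF : Pairwise (Function.onFun Disjoint F)) : WUC fun n => ∑ i ∈ F n, x i := by
  obtain ⟨C, hC⟩ := hx.exists_norm_sum_le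
  refine wuc_of_norm_sum_le (C := C) fun G => ?_
  rw [← Finset.sum_biUnion (hF.set_pairwise _)]
  exact hC _

theorem WUC.summable_smul [CompleteSpace X] (hx : WUC x) (a : c0) :
    Summable fun i => a i • x i := by
  obtain ⟨C, hC⟩ := hx.exists_norm_sum_le
  have hC0 : 0 ≤ C := (norm_nonneg _).trans (hC ∅)
  refine summable_iff_vanishing_norm.2 fun ε hε => ?_
  obtain ⟨N, hN⟩ := eventually_atTop.1
    (a.tendsto_zero.abs.eventually_lt_const (u := ε / (2 * C + 1)) (by rw [abs_zero]; positivity))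
  refine ⟨Finset.range N, fun F hF => ?_⟩
  calc ‖∑ i ∈ F, a i • x i‖ ≤ 2 * C * (ε / (2 * C + 1)) :=
        norm_sum_smul_le hC (by positivity)
          fun i hi => (hN i (by simpa using Finset.disjoint_left.1 hF hi)).le
    _ < (2 * C + 1) * (ε / (2 * C + 1)) := by gcongr; linarith
    _ = ε := by field_simp

theorem WUC.exists_norm_tsum_smul_le [CompleteSpace X] (hx : WUC x) :
    ∃ C, ∀ a : c0, ‖∑' i, a i • x i‖ ≤ C * ‖a‖ := by
  obtain ⟨C, hC⟩ := hx.exists_norm_sum_le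
  exact ⟨2 * C, fun a => le_of_tendsto (hx.summable_smul a).hasSum.norm <|
    Eventually.of_forall fun _ => norm_sum_smul_le hC (norm_nonneg a)
      fun i _ => a.abs_apply_le_norm i⟩

/-- The operator `c₀ → X`, `a ↦ ∑ aᵢ xᵢ`, associated with a w.u.C. series `∑ xᵢ`. -/
def WUC.toCLM [CompleteSpace X] (hx : WUC x) : c0 →L[ℝ] X :=
  LinearMap.mkContinuousOfExistsBound
    { toFun := fun a => ∑' i, a i • x i
      map_add' := fun a b => by
        simp only [ZeroAtInftyContinuousMap.add_apply, add_smul]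
        exact (hx.summable_smul a).tsum_add (hx.summable_smul b)
      map_smul' := fun r a => by
        simp only [ZeroAtInftyContinuousMap.smul_apply, smul_assoc, RingHom.id_apply]
        exact (hx.summable_smul a).tsum_const_smul r } hx.exists_norm_tsum_smul_le

theorem WUC.toCLM_apply [CompleteSpace X] (hx : WUC x) (a : c0) :
    hx.toCLM a = ∑' i, a i • x i := rfl

@[simp]
theorem WUC.toCLM_e [CompleteSpace X] (hx : WUC x) (n : ℕ) : hx.toCLM (e n) = x n := by
  rw [hx.toCLM_apply, tsum_eq_single n fun m hm => by simp [c0.e_apply, hm]]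
  simp [c0.e_apply]

end WUC

theorem wuc_smul_e {l : ℕ → ℝ} {C : ℝ} (hl : ∀ i, |l i| ≤ C) : WUC fun i => l i • e i :=
  wuc_of_norm_sum_le fun _ =>
    c0.norm_sum_smul_e_le ((abs_nonneg _).trans (hl 0)) fun i _ => hl i

theorem wuc_e : WUC e := wuc_of_norm_sum_le c0.norm_sum_e_le_one

theorem c0.hasSum_smul_e (a : c0) : HasSum (fun i => a i • e i) a := by
  have hsum := (wuc_e.summable_smul a).hasSum
  suffices ∑' i, a i • e i = a by rwa [this] at hsum
  ext t
  calc (∑' i, a i • e i) t = ∑' i, a i • e i t :=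
        (coord t).map_tsum hsum.summable
    _ = a t := by
        rw [tsum_eq_single t fun i hi => by simp [e_apply, hi.symm]]
        simp [e_apply]

section OperatorsOnC0

variable {X : Type*} [NormedAddCommGroup X] [NormedSpace ℝ X]

theorem c0.map_eq_tsum (T : c0 →L[ℝ] X) (a : c0) : T a = ∑' i, a i • T (e i) := by
  simpa using (T.hasSum (hasSum_smul_e a)).tsum_eq.symm

theorem c0.clm_ext {S T : c0 →L[ℝ] X} (h : ∀ n, S (e n) = T (e n)) : S = T := by
  ext a
  rw [map_eq_tsum S, map_eq_tsum T]
  simp only [h]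

end OperatorsOnC0

-- If no row `{pair p q | q}` works, each row loses at least `δ` of its mass to indices off the
-- transversal `p ↦ pair p (q p)`, so the bound on the transversal drops from `(K + 1) δ` to `K δ`.
theorem exists_injective_offDiag_sum_le {δ : ℝ} (hδ : 0 ≤ δ) (K : ℕ) :
    ∀ a : ℕ → ℕ → ℝ, (∀ n (F : Finset ℕ), ∑ m ∈ F, a n m ≤ K * δ) →
      ∃ f : ℕ → ℕ, Function.Injective f ∧
        ∀ n (F : Finset ℕ), n ∉ F → ∑ m ∈ F, a (f n) (f m) ≤ δ := by
  induction K with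
  | zero =>
    intro a ha
    refine ⟨id, Function.injective_id, fun n F _ => (ha n F).trans ?_⟩
    simpa using hδ
  | succ K ih =>
    intro a ha
    by_cases hrow : ∃ p, ∀ q (F : Finset ℕ), q ∉ F →
        ∑ m ∈ F, a (Nat.pair p q) (Nat.pair p m) ≤ δ
    · obtain ⟨p, hp⟩ := hrow
      exact ⟨Nat.pair p, fun q q' h => (Nat.pair_eq_pair.1 h).2, hp⟩
    · push Not at hrow
      choose q F hqF hδF using hrow
      let k : ℕ → ℕ := fun p => Nat.pair p (q p)
      have hk : Function.Injective k := fun p p' h => (Nat.pair_eq_pair.1 h).1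
      obtain ⟨f, hf, hsum⟩ := ih (fun n m => a (k n) (k m)) fun p G => by
        have hdisj : Disjoint (G.image k) ((F p).image (Nat.pair p)) := by
          simp only [Finset.disjoint_left, Finset.mem_image, not_exists, not_and]
          rintro _ ⟨m, -, rfl⟩ t ht hmt
          obtain ⟨rfl, rfl⟩ := Nat.pair_eq_pair.1 hmt
          exact hqF _ ht
        have hle := ha (k p) (G.image k ∪ (F p).image (Nat.pair p))
        rw [Finset.sum_union hdisj, Finset.sum_image hk.injOn,
          Finset.sum_image fun _ _ _ _ h => (Nat.pair_eq_pair.1 h).2] at hle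
        push_cast at hle
        linarith [hδF p]
      exact ⟨k ∘ f, hk.comp hf, hsum⟩

theorem exists_strictMono_offDiag_sum_le {a : ℕ → ℕ → ℝ} {C δ : ℝ} (hδ : 0 < δ)
    (ha : ∀ n (F : Finset ℕ), ∑ m ∈ F, a n m ≤ C) :
    ∃ f : ℕ → ℕ, StrictMono f ∧
      ∀ n (F : Finset ℕ), n ∉ F → ∑ m ∈ F, a (f n) (f m) ≤ δ := by
  obtain ⟨K, hK⟩ := exists_nat_ge (C / δ)
  obtain ⟨f, hf, hsum⟩ := exists_injective_offDiag_sum_le hδ.le K a fun n F =>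
    (ha n F).trans ((div_le_iff₀ hδ).1 hK)
  obtain ⟨g, hg, hfg⟩ := strictMono_subseq_of_tendsto_atTop hf.nat_tendsto_atTop
  refine ⟨f ∘ g, hfg, fun n F hn => ?_⟩
  have := hsum (g n) (F.map ⟨g, hg.injective⟩) (by simpa [hg.injective.eq_iff] using hn)
  simpa using this

theorem exists_pairwise_disjoint_le_norm_sum {X : Type*} [NormedAddCommGroup X]
    [CompleteSpace X] {x : ℕ → X} (hx : ¬ Summable x) :
    ∃ ε > 0, ∃ F : ℕ → Finset ℕ, Pairwise (Function.onFun Disjoint F) ∧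
      ∀ n, ε ≤ ‖∑ i ∈ F n, x i‖ := by
  rw [summable_iff_vanishing_norm] at hx
  push Not at hx
  obtain ⟨ε, hε, h⟩ := hx
  choose t htdisj ht using h
  let s : ℕ → Finset ℕ := fun n => (fun s => s ∪ t s)^[n] ∅
  have hs : ∀ n, s (n + 1) = s n ∪ t (s n) := fun n => Function.iterate_succ_apply' _ _ _
  have hmono : Monotone s := monotone_nat_of_le_succ fun n => hs n ▸ Finset.subset_union_left
  refine ⟨ε, hε, fun n => t (s n), (pairwise_disjoint_on _).2 fun m n hmn => ?_, fun n => ht _⟩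
  have hts : t (s m) ⊆ s n := (hs m ▸ Finset.subset_union_right).trans (hmono hmn)
  exact ((htdisj (s n)).mono_right hts).symm

section BessagaPelczynski

variable {X : Type*} [NormedAddCommGroup X] [NormedSpace ℝ X]

/-- An operator on `c₀` is an isomorphic embedding if it is bounded below. -/
def IsC0Embedding (j : c0 →L[ℝ] X) : Prop :=
  ∃ c : ℝ, 0 < c ∧ ∀ z, c * ‖z‖ ≤ ‖j z‖

theorem c0.abs_apply_mul_le (ψ : c0 →L[ℝ] ℝ) {n : ℕ} {δ : ℝ}
    (hoff : ∀ F : Finset ℕ, n ∉ F → ∑ m ∈ F, |ψ (e m)| ≤ δ) (a : c0) :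
    |a n| * |ψ (e n)| ≤ |ψ a| + δ * ‖a‖ := by
  refine ge_of_tendsto ((ψ.hasSum (hasSum_smul_e a)).abs.add_const (δ * ‖a‖)) ?_
  filter_upwards [eventually_ge_atTop {n}] with F hF
  have hrest : |∑ m ∈ F.erase n, ψ (a m • e m)| ≤ δ * ‖a‖ := by
    calc |∑ m ∈ F.erase n, ψ (a m • e m)| ≤ ∑ m ∈ F.erase n, |ψ (e m)| * ‖a‖ := by
          refine (Finset.abs_sum_le_sum_abs _ _).trans (Finset.sum_le_sum fun m _ => ?_)
          rw [map_smul, smul_eq_mul, abs_mul, mul_comm]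
          gcongr
          exact abs_apply_le_norm a m
      _ ≤ δ * ‖a‖ := by
          rw [← Finset.sum_mul]
          gcongr
          exact hoff _ (F.notMem_erase n)
  have hn : ψ (a n • e n) = (∑ m ∈ F, ψ (a m • e m)) - ∑ m ∈ F.erase n, ψ (a m • e m) := by
    rw [← Finset.add_sum_erase F _ (Finset.singleton_subset_iff.1 hF), add_sub_cancel_right]
  calc |a n| * |ψ (e n)| = |ψ (a n • e n)| := by rw [map_smul, smul_eq_mul, abs_mul]
    _ ≤ |∑ m ∈ F, ψ (a m • e m)| + |∑ m ∈ F.erase n, ψ (a m • e m)| := hn ▸ abs_sub _ _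
    _ ≤ |∑ m ∈ F, ψ (a m • e m)| + δ * ‖a‖ := by gcongr

theorem isC0Embedding_of_almost_biorthogonal {T : c0 →L[ℝ] X} {φ : ℕ → X →L[ℝ] ℝ} {δ ε : ℝ}
    (hδε : δ < ε) (hφ : ∀ n, ‖φ n‖ ≤ 1) (hdiag : ∀ n, ε ≤ |φ n (T (e n))|)
    (hoff : ∀ n (F : Finset ℕ), n ∉ F → ∑ m ∈ F, |φ n (T (e m))| ≤ δ) : IsC0Embedding T := by
  have hδ : 0 ≤ δ := by simpa using hoff 0 ∅
  have hε : 0 < ε := hδ.trans_lt hδε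
  refine ⟨ε - δ, sub_pos.2 hδε, fun a => ?_⟩
  have hcoord : ∀ n, |a n| ≤ (‖T a‖ + δ * ‖a‖) / ε := fun n => by
    rw [le_div_iff₀ hε]
    calc |a n| * ε ≤ |a n| * |φ n (T (e n))| := by gcongr; exact hdiag n
      _ ≤ |φ n (T a)| + δ * ‖a‖ := c0.abs_apply_mul_le ((φ n).comp T) (hoff n) a
      _ ≤ ‖T a‖ + δ * ‖a‖ := by
          gcongr
          exact ((φ n).le_of_opNorm_le (hφ n) _).trans_eq (one_mul _)
  have := (le_div_iff₀ hε).1 ((c0.norm_le_iff (by positivity)).2 hcoord)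
  linarith

theorem WUC.exists_strictMono_isC0Embedding [CompleteSpace X] {y : ℕ → X} (hy : WUC y) {ε : ℝ}
    (hε : 0 < ε) (hyε : ∀ n, ε ≤ ‖y n‖) :
    ∃ f, ∃ hf : StrictMono f, IsC0Embedding (hy.comp_injective hf.injective).toCLM := by
  obtain ⟨C, hC⟩ := hy.exists_norm_sum_le
  have hC0 : 0 ≤ C := (norm_nonneg _).trans (hC ∅)
  choose φ hφ hφy using fun n => exists_dual_vector'' ℝ (y n)
  obtain ⟨f, hf, hoff⟩ := exists_strictMono_offDiag_sum_le (a := fun n m => |φ n (y m)|)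
    (half_pos hε) fun n F => calc
      ∑ m ∈ F, |φ n (y m)| ≤ 2 * (C * ‖φ n‖) := sum_abs_dual_le hC (φ n) F
      _ ≤ 2 * (C * 1) := by gcongr; exact hφ n
  refine ⟨f, hf, isC0Embedding_of_almost_biorthogonal (half_lt_self hε)
    (fun n => hφ (f n)) (fun n => ?_) fun n F hn => ?_⟩
  · simpa [hφy] using hyε (f n)
  · simpa using hoff n F hn

theorem exists_isC0Embedding_comp_of_not_summable [CompleteSpace X] {L : c0 →L[ℝ] X}
    (hL : ¬ Summable fun n => L (e n)) : ∃ S : c0 →L[ℝ] c0, IsC0Embedding (L.comp S) := by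
  obtain ⟨ε, hε, F, hF, hεF⟩ := exists_pairwise_disjoint_le_norm_sum hL
  have hu : WUC fun n => ∑ i ∈ F n, e i := wuc_e.sum_of_pairwise_disjoint hF
  obtain ⟨f, hf, hemb⟩ := (hu.map L).exists_strictMono_isC0Embedding hε
    fun n => (hεF n).trans_eq (by rw [map_sum])
  refine ⟨(hu.comp_injective hf.injective).toCLM, ?_⟩
  convert hemb using 1
  exact c0.clm_ext fun n => by simp

end BessagaPelczynski

section WeakCompactness

variable {Y Y' : Type*} [NormedAddCommGroup Y] [NormedSpace ℝ Y]
  [NormedAddCommGroup Y'] [NormedSpace ℝ Y'] {s t : Set Y} {f g : ℕ → Y}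

theorem RelWeakCompact.of_image_subset {K : Set (WeakSpace ℝ Y)} (hK : IsCompact K)
    (h : toWeakSpace ℝ Y '' s ⊆ K) : RelWeakCompact s :=
  hK.closure_of_subset h

theorem RelWeakCompact.mono (ht : RelWeakCompact t) (h : s ⊆ t) : RelWeakCompact s :=
  .of_image_subset ht ((Set.image_mono h).trans subset_closure)

theorem RelWeakCompact.of_isCompact_closure (hs : IsCompact (closure s)) : RelWeakCompact s :=
  .of_image_subset (hs.image (toWeakSpaceCLM ℝ Y).continuous) (Set.image_mono subset_closure)

theorem RelWeakCompact.image (hs : RelWeakCompact s) (T : Y →L[ℝ] Y') :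
    RelWeakCompact (T '' s) := by
  refine .of_image_subset (IsCompact.image hs (WeakSpace.map T).continuous) ?_
  rintro _ ⟨_, ⟨y, hy, rfl⟩, rfl⟩
  exact ⟨toWeakSpace ℝ Y y, subset_closure ⟨y, hy, rfl⟩, rfl⟩

theorem RelWeakCompact.range_sub (hf : RelWeakCompact (Set.range f))
    (hg : RelWeakCompact (Set.range g)) : RelWeakCompact (Set.range fun n => f n - g n) := by
  refine .of_image_subset ((IsCompact.prod hf hg).image (continuous_fst.sub continuous_snd)) ?_
  rintro _ ⟨_, ⟨n, rfl⟩, rfl⟩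
  exact ⟨(toWeakSpace ℝ Y (f n), toWeakSpace ℝ Y (g n)),
    ⟨subset_closure ⟨_, ⟨n, rfl⟩, rfl⟩, subset_closure ⟨_, ⟨n, rfl⟩, rfl⟩⟩,
    (map_sub (toWeakSpace ℝ Y) _ _).symm⟩

theorem isCompact_closure_range_of_tendsto {Y : Type*} [TopologicalSpace Y] [R1Space Y]
    {f : ℕ → Y} {L : Y} (hf : Tendsto f atTop (𝓝 L)) : IsCompact (closure (Set.range f)) :=
  hf.isCompact_insert_range.closure_of_subset (Set.subset_insert _ _)

-- The point is a weak cluster point of `f`; closed convex sets are weakly closed.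
theorem RelWeakCompact.exists_forall_mem_of_convex (hf : RelWeakCompact (Set.range f)) :
    ∃ y, ∀ C : Set Y, IsClosed C → Convex ℝ C → (∀ᶠ n in atTop, f n ∈ C) → y ∈ C := by
  have hmem : ∃ᶠ n in atTop, toWeakSpace ℝ Y (f n) ∈
      closure (toWeakSpace ℝ Y '' Set.range f) :=
    Frequently.of_forall fun n => subset_closure ⟨_, ⟨n, rfl⟩, rfl⟩
  obtain ⟨w, -, hw⟩ := IsCompact.exists_mapClusterPt_of_frequently hf hmem
  refine ⟨(toWeakSpace ℝ Y).symm w, fun C hC hconv hfC => ?_⟩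
  have hclosed : IsClosed (toWeakSpace ℝ Y '' C) := by
    rw [← hC.closure_eq, hconv.toWeakSpace_closure ℝ]
    exact isClosed_closure
  obtain ⟨y, hy, rfl⟩ := hclosed.mem_of_mapClusterPt hw (hfC.mono fun n hn => ⟨_, hn, rfl⟩)
  simpa using hy

theorem exists_tendsto_of_cauchySeq_of_relWeakCompact (hf : CauchySeq f)
    (hcpt : RelWeakCompact (Set.range f)) : ∃ L, Tendsto f atTop (𝓝 L) := by
  obtain ⟨y, hy⟩ := hcpt.exists_forall_mem_of_convex
  refine ⟨y, tendsto_iff_dist_tendsto_zero.2 (tendsto_order.2 ⟨fun a ha => ?_, fun ε hε => ?_⟩)⟩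
  · exact .of_forall fun n => ha.trans_le dist_nonneg
  · obtain ⟨N, hN⟩ := Metric.cauchySeq_iff.1 hf (ε / 2) (half_pos hε)
    filter_upwards [eventually_ge_atTop N] with n hn
    have hyn : y ∈ closedBall (f n) (ε / 2) := hy _ isClosed_closedBall (convex_closedBall _ _)
      (eventually_atTop.2 ⟨N, fun m hm => (hN m hm n hn).le⟩)
    rw [dist_comm]
    exact (mem_closedBall.1 hyn).trans_lt (half_lt_self hε)

end WeakCompactness

namespace IsC0Embedding

variable {Y : Type*} [NormedAddCommGroup Y] [NormedSpace ℝ Y] {j : c0 →L[ℝ] Y}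

theorem isClosedEmbedding (hj : IsC0Embedding j) : IsClosedEmbedding j := by
  obtain ⟨c, hc, hcj⟩ := hj
  have hanti : AntilipschitzWith (Real.toNNReal c⁻¹) j := j.antilipschitz_of_bound fun z => by
    rw [Real.coe_toNNReal _ (by positivity), inv_mul_eq_div, le_div_iff₀ hc, mul_comm]
    exact hcj z
  exact hanti.isClosedEmbedding j.uniformContinuous

theorem not_relWeakCompact_sum (hj : IsC0Embedding j) :
    ¬ RelWeakCompact (Set.range fun m => ∑ i ∈ Finset.range m, j (e i)) := by
  intro h
  obtain ⟨y, hy⟩ := h.exists_forall_mem_of_convex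
  have hcoord : ∀ i, y ∈ j '' (c0.coord i ⁻¹' {1}) := fun i => by
    refine hy _ (hj.isClosedEmbedding.isClosedMap _
      (isClosed_singleton.preimage (c0.coord i).continuous))
      (((convex_singleton 1).linear_preimage (c0.coord i).toLinearMap).linear_image
        j.toLinearMap) ?_
    filter_upwards [eventually_gt_atTop i] with m hm
    refine ⟨∑ i ∈ Finset.range m, (1 : ℕ → ℝ) i • e i, ?_, by simp⟩
    rw [Set.mem_preimage, c0.coord_apply, c0.sum_smul_e_apply, if_pos (Finset.mem_range.2 hm)]
    rfl
  obtain ⟨b, -, rfl⟩ := hcoord 0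
  have hb : ∀ i, b i = 1 := fun i => by
    obtain ⟨b', hb', h⟩ := hcoord i
    exact hj.isClosedEmbedding.injective h ▸ hb'
  exact one_ne_zero (tendsto_nhds_unique (tendsto_const_nhds.congr fun i => (hb i).symm)
    b.tendsto_zero)

theorem not_summable (hj : IsC0Embedding j) : ¬ Summable fun n => j (e n) := fun h =>
  hj.not_relWeakCompact_sum <| .of_isCompact_closure <|
    isCompact_closure_range_of_tendsto h.hasSum.tendsto_sum_nat

theorem not_compactMap (hj : IsC0Embedding j) : ¬ CompactMap j := fun h =>
  hj.not_relWeakCompact_sum <| (RelWeakCompact.of_isCompact_closure h).mono <| by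
    rintro _ ⟨m, rfl⟩
    exact ⟨∑ i ∈ Finset.range m, e i, by simpa using c0.norm_sum_e_le_one _, map_sum _ _ _⟩

end IsC0Embedding

theorem WUC.tendsto_zero_of_relWeakCompact {Y : Type*} [NormedAddCommGroup Y] [NormedSpace ℝ Y]
    [CompleteSpace Y] {y : ℕ → Y} (hy : WUC y)
    (hcpt : ∀ f : ℕ → ℕ, StrictMono f →
      RelWeakCompact (Set.range fun m => ∑ i ∈ Finset.range m, y (f i))) :
    Tendsto y atTop (𝓝 0) := by
  by_contra hlim
  obtain ⟨ε, hε, hfreq⟩ : ∃ ε > 0, ∃ᶠ n in atTop, ε ≤ ‖y n‖ := by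
    simpa [NormedAddGroup.tendsto_nhds_zero, frequently_atTop] using hlim
  obtain ⟨f, hf, hεf⟩ := extraction_of_frequently_atTop hfreq
  obtain ⟨g, hg, hemb⟩ :=
    (hy.comp_injective hf.injective).exists_strictMono_isC0Embedding hε hεf
  refine hemb.not_relWeakCompact_sum ?_
  simpa using hcpt (f ∘ g) (hf.comp hg)

theorem exists_strictMono_greedy {P : ℕ → ℕ → Prop} (hP : ∀ m, ∀ᶠ n in atTop, P m n) :
    ∃ g : ℕ → ℕ, StrictMono g ∧ ∀ i, ∃ m ≥ i, (∀ j < i, g j < m) ∧ P m (g i) := by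
  choose N hPN hmN using fun m => ((hP m).and (eventually_ge_atTop m)).exists
  let M : ℕ → ℕ := fun i => (fun m => N m + 1)^[i] 0
  have hM : ∀ i, M (i + 1) = N (M i) + 1 := fun i => Function.iterate_succ_apply' _ _ _
  have hMmono : StrictMono M := strictMono_nat_of_lt_succ fun i =>
    hM i ▸ Nat.lt_succ_of_le (hmN (M i))
  have hlt : ∀ {j i}, j < i → N (M j) < M i := fun {j i} hji =>
    Nat.lt_of_succ_le ((hM j).symm.trans_le (hMmono.monotone hji))
  exact ⟨N ∘ M, fun j i hji => (hlt hji).trans_le (hmN (M i)),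
    fun i => ⟨M i, hMmono.id_le i, fun j hj => hlt hj, hPN (M i)⟩⟩

theorem sum_half_pow_le_two (F : Finset ℕ) : ∑ i ∈ F, (1 / 2 : ℝ) ^ i ≤ 2 :=
  (summable_geometric_two.sum_le_tsum F fun _ _ => by positivity).trans_eq tsum_geometric_two

theorem half_pow_le_half_pow {m n : ℕ} (h : m ≤ n) : (1 / 2 : ℝ) ^ n ≤ (1 / 2) ^ m :=
  pow_le_pow_of_le_one (by norm_num) (by norm_num) h

theorem sum_le_add_two_of_pairwise {f : ℕ → ℝ} {M : ℝ} (hM : 0 ≤ M) (hfM : ∀ i, f i ≤ M)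
    (hf : Pairwise fun i j => f i ≤ (1 / 2) ^ i ∨ f j ≤ (1 / 2) ^ j) (F : Finset ℕ) :
    ∑ i ∈ F, f i ≤ M + 2 := by
  by_cases hbig : ∃ i ∈ F, ¬ f i ≤ (1 / 2) ^ i
  · obtain ⟨i, hiF, hi⟩ := hbig
    rw [← Finset.add_sum_erase F f hiF]
    refine add_le_add (hfM i) ((Finset.sum_le_sum fun j hj => ?_).trans
      (sum_half_pow_le_two (F.erase i)))
    exact (hf (Finset.ne_of_mem_erase hj).symm).resolve_left hi
  · push Not at hbig
    linarith [Finset.sum_le_sum hbig, sum_half_pow_le_two F]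

/-- Bounded coordinatewise convergence of a sequence in `c₀` to an element `l` of `ℓ^∞`, that is,
weak-* convergence of sequences in the bidual of `c₀`. -/
def CoordTendsto (a : ℕ → c0) (l : ℕ → ℝ) : Prop :=
  (∃ M, ∀ n, ‖a n‖ ≤ M) ∧ ∀ t, Tendsto (fun n => a n t) atTop (𝓝 (l t))

namespace CoordTendsto

variable {a b : ℕ → c0} {l l' : ℕ → ℝ}

theorem comp (ha : CoordTendsto a l) {u : ℕ → ℕ} (hu : Tendsto u atTop atTop) :
    CoordTendsto (a ∘ u) l :=
  ⟨ha.1.imp fun _ hM n => hM (u n), fun t => (ha.2 t).comp hu⟩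

theorem sub (ha : CoordTendsto a l) (hb : CoordTendsto b l') :
    CoordTendsto (fun n => a n - b n) fun t => l t - l' t := by
  obtain ⟨⟨M, hM⟩, ha⟩ := ha
  obtain ⟨⟨M', hM'⟩, hb⟩ := hb
  exact ⟨⟨M + M', fun n => norm_sub_le_of_le (hM n) (hM' n)⟩, fun t => (ha t).sub (hb t)⟩

theorem exists_abs_le (ha : CoordTendsto a l) : ∃ M, ∀ t, |l t| ≤ M := by
  obtain ⟨⟨M, hM⟩, hlim⟩ := ha
  exact ⟨M, fun t => le_of_tendsto (hlim t).abs <|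
    Eventually.of_forall fun n => ((a n).abs_apply_le_norm t).trans (hM n)⟩

end CoordTendsto

theorem exists_coordTendsto_subseq {a : ℕ → c0} (ha : ∃ M, ∀ n, ‖a n‖ ≤ M) :
    ∃ φ : ℕ → ℕ, StrictMono φ ∧ ∃ l, CoordTendsto (a ∘ φ) l := by
  obtain ⟨M, hM⟩ := ha
  obtain ⟨l, -, φ, hφ, hl⟩ := (isCompact_univ_pi fun _ : ℕ => isCompact_Icc).tendsto_subseq
    (x := fun n => ⇑(a n)) (s := Set.univ.pi fun _ => Set.Icc (-M) M)
    fun n t _ => abs_le.1 (((a n).abs_apply_le_norm t).trans (hM n))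
  exact ⟨φ, hφ, l, ⟨M, fun n => hM (φ n)⟩, tendsto_pi_nhds.1 hl⟩

theorem WUC.coordTendsto_sum_range {z : ℕ → c0} (hz : WUC z) :
    CoordTendsto (fun n => ∑ i ∈ Finset.range n, z i) fun t => ∑' i, z i t := by
  obtain ⟨C, hC⟩ := hz.exists_norm_sum_le
  refine ⟨⟨C, fun n => hC _⟩, fun t => ?_⟩
  simp only [c0.sum_apply]
  exact (hz (c0.coord t)).of_abs.hasSum.tendsto_sum_nat

theorem coordTendsto_sum_smul_e {l : ℕ → ℝ} {C : ℝ} (hl : ∀ t, |l t| ≤ C) :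
    CoordTendsto (fun n => ∑ i ∈ Finset.range n, l i • e i) l := by
  refine ⟨⟨C, fun n => c0.norm_sum_smul_e_le ((abs_nonneg _).trans (hl 0)) fun i _ => hl i⟩,
    fun t => tendsto_const_nhds.congr' ?_⟩
  filter_upwards [eventually_gt_atTop t] with n hn
  rw [c0.sum_smul_e_apply, if_pos (Finset.mem_range.2 hn)]

theorem c0.eventually_abs_le_or_abs_le (a : c0) {x : ℕ → c0}
    (hx : ∀ t, Tendsto (fun n => x n t) atTop (𝓝 0)) {δ : ℝ} (hδ : 0 < δ) :
    ∀ᶠ n in atTop, ∀ t, |a t| ≤ δ ∨ |x n t| ≤ δ := by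
  obtain ⟨N, hN⟩ := eventually_atTop.1 (a.tendsto_zero.abs.eventually_le_const (by simpa))
  have hlow : ∀ᶠ n in atTop, ∀ t ∈ Finset.range N, |x n t| ≤ δ :=
    (eventually_all_finset _).2 fun t _ => (hx t).abs.eventually_le_const (by simpa)
  filter_upwards [hlow] with n hn t
  exact (le_or_gt N t).imp (hN t) fun ht => hn t (Finset.mem_range.2 ht)

theorem CoordTendsto.exists_strictMono_wuc {x : ℕ → c0} (hx : CoordTendsto x 0) :
    ∃ g : ℕ → ℕ, StrictMono g ∧ WUC (x ∘ g) := by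
  obtain ⟨⟨M, hM⟩, hlim⟩ := hx
  have hM0 : 0 ≤ M := (norm_nonneg _).trans (hM 0)
  obtain ⟨g, hg, hsmall⟩ := exists_strictMono_greedy
    (P := fun m n => ∀ j ∈ Finset.range m, ∀ t, |x j t| ≤ (1 / 2) ^ m ∨ |x n t| ≤ (1 / 2) ^ m)
    fun m => (eventually_all_finset _).2 fun j _ =>
      (x j).eventually_abs_le_or_abs_le hlim (by positivity)
  have hlt : ∀ t {i j}, i < j → |x (g i) t| ≤ (1 / 2) ^ i ∨ |x (g j) t| ≤ (1 / 2) ^ j := by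
    intro t i j hij
    obtain ⟨m, hjm, hgm, hP⟩ := hsmall j
    exact (hP (g i) (Finset.mem_range.2 (hgm i hij)) t).imp
      (fun h => h.trans (half_pow_le_half_pow (hij.le.trans hjm)))
      fun h => h.trans (half_pow_le_half_pow hjm)
  refine ⟨g, hg, wuc_of_norm_sum_le (C := M + 2) fun F =>
    (c0.norm_le_iff (by positivity)).2 fun t => ?_⟩
  rw [c0.sum_apply]
  refine (Finset.abs_sum_le_sum_abs _ _).trans (sum_le_add_two_of_pairwise hM0
    (fun i => ((x (g i)).abs_apply_le_norm t).trans (hM _)) (fun i j hij => ?_) F)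
  exact hij.lt_or_gt.elim (hlt t) fun h => (hlt t h).symm

/-- `q` is bounded on bounded sets. -/
def BoundedOnBalls {E Y : Type*} [NormedAddCommGroup E] [NormedAddCommGroup Y] (q : E → Y) : Prop :=
  ∀ R : ℝ, ∃ C : ℝ, ∀ x, ‖x‖ ≤ R → ‖q x‖ ≤ C

/-- `q` is additive on the finite sums of the sequence `x`, up to a summable error: adding the term
`x i` to a sum of earlier terms costs at most `2⁻ⁱ`. -/
def AlmostAdditive {E Y : Type*} [AddCommMonoid E] [NormedAddCommGroup Y] (q : E → Y)
    (x : ℕ → E) : Prop :=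
  ∀ i (G : Finset ℕ), (∀ j ∈ G, j < i) →
    ‖q (x i + ∑ j ∈ G, x j) - q (x i) - q (∑ j ∈ G, x j)‖ ≤ (1 / 2) ^ i

section AlmostAdditive

variable {E Y : Type*} [NormedAddCommGroup Y]

theorem exists_strictMono_almostAdditive [AddCommMonoid E] {q : E → Y} {x : ℕ → E}
    (h : ∀ z, Tendsto (fun n => q (x n + z) - q (x n) - q z) atTop (𝓝 0)) :
    ∃ g : ℕ → ℕ, StrictMono g ∧ AlmostAdditive q (x ∘ g) := by
  obtain ⟨g, hg, hsmall⟩ := exists_strictMono_greedy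
    (P := fun m n => ∀ G ∈ (Finset.range m).powerset,
      ‖q (x n + ∑ j ∈ G, x j) - q (x n) - q (∑ j ∈ G, x j)‖ ≤ (1 / 2) ^ m)
    fun m => (eventually_all_finset _).2 fun G _ =>
      (h _).norm.eventually_le_const (by rw [norm_zero]; positivity)
  refine ⟨g, hg, fun i G hG => ?_⟩
  obtain ⟨m, him, hgm, hP⟩ := hsmall i
  have := hP (G.map ⟨g, hg.injective⟩) <| Finset.mem_powerset.2 fun _ hn => by
    obtain ⟨j, hj, rfl⟩ := Finset.mem_map.1 hn
    exact Finset.mem_range.2 (hgm j (hG j hj))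
  rw [Finset.sum_map] at this
  exact this.trans (half_pow_le_half_pow him)

namespace AlmostAdditive

theorem comp [AddCommMonoid E] {q : E → Y} {x : ℕ → E} (h : AlmostAdditive q x) {f : ℕ → ℕ}
    (hf : StrictMono f) : AlmostAdditive q (x ∘ f) := fun i G hG => by
  have := h (f i) (G.map ⟨f, hf.injective⟩) fun _ hn => by
    obtain ⟨j, hj, rfl⟩ := Finset.mem_map.1 hn
    exact hf (hG j hj)
  rw [Finset.sum_map] at this
  exact this.trans (half_pow_le_half_pow (hf.id_le i))

theorem norm_sum_sub_le_two [AddCommMonoid E] {q : E → Y} {x : ℕ → E} (h : AlmostAdditive q x)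
    (hq : q 0 = 0) (F : Finset ℕ) : ‖∑ i ∈ F, q (x i) - q (∑ i ∈ F, x i)‖ ≤ 2 := by
  refine le_trans ?_ (sum_half_pow_le_two F)
  induction F using Finset.induction_on_max with
  | empty => simp [hq]
  | insert i F hF ih =>
    have hi : i ∉ F := fun hi => (hF i hi).false
    rw [Finset.sum_insert hi, Finset.sum_insert hi, Finset.sum_insert hi]
    calc ‖q (x i) + ∑ j ∈ F, q (x j) - q (x i + ∑ j ∈ F, x j)‖
        = ‖(∑ j ∈ F, q (x j) - q (∑ j ∈ F, x j)) -
            (q (x i + ∑ j ∈ F, x j) - q (x i) - q (∑ j ∈ F, x j))‖ := by congr 1; abel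
      _ ≤ ∑ j ∈ F, (1 / 2) ^ j + (1 / 2) ^ i := norm_sub_le_of_le ih (h i F hF)
      _ = (1 / 2) ^ i + ∑ j ∈ F, (1 / 2) ^ j := add_comm _ _

theorem wuc [NormedSpace ℝ Y] [NormedAddCommGroup E] [NormedSpace ℝ E] {q : E → Y} {x : ℕ → E}
    (h : AlmostAdditive q x) (hq : q 0 = 0) (hbdd : BoundedOnBalls q) (hx : WUC x) :
    WUC (q ∘ x) := by
  obtain ⟨C, hC⟩ := hx.exists_norm_sum_le
  obtain ⟨B, hB⟩ := hbdd C
  refine wuc_of_norm_sum_le (C := B + 2) fun F => ?_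
  calc ‖∑ i ∈ F, q (x i)‖ ≤ ‖q (∑ i ∈ F, x i)‖ + ‖∑ i ∈ F, q (x i) - q (∑ i ∈ F, x i)‖ :=
        norm_le_insert' _ _
    _ ≤ B + 2 := add_le_add (hB _ (hC F)) (h.norm_sum_sub_le_two hq F)

theorem relWeakCompact_sum [NormedSpace ℝ Y] [CompleteSpace Y] [AddCommMonoid E] {q : E → Y}
    {x : ℕ → E} (h : AlmostAdditive q x)
    (hcpt : RelWeakCompact (Set.range fun m => q (∑ i ∈ Finset.range m, x i))) :
    RelWeakCompact (Set.range fun m => ∑ i ∈ Finset.range m, q (x i)) := by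
  let r : ℕ → Y := fun m => q (∑ i ∈ Finset.range m, x i) - ∑ i ∈ Finset.range m, q (x i)
  have hr : CauchySeq r := cauchySeq_of_le_geometric (1 / 2) 1 (by norm_num) fun m => by
    have hstep : r (m + 1) - r m = q (x m + ∑ i ∈ Finset.range m, x i) - q (x m)
        - q (∑ i ∈ Finset.range m, x i) := by
      simp only [r, Finset.sum_range_succ, add_comm (x m)]
      abel
    rw [dist_comm, dist_eq_norm, hstep, one_mul]
    exact h m _ fun j => Finset.mem_range.1
  obtain ⟨L, hL⟩ := cauchySeq_tendsto_of_complete hr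
  simpa [r] using hcpt.range_sub (.of_isCompact_closure (isCompact_closure_range_of_tendsto hL))

end AlmostAdditive

end AlmostAdditive

/-- `Q` maps the partial sums of every w.u.C. series to a relatively weakly compact set. -/
def RelWeakCompactOnWUC {X Y : Type*} [NormedAddCommGroup X] [NormedSpace ℝ X]
    [NormedAddCommGroup Y] [NormedSpace ℝ Y] (Q : X → Y) : Prop :=
  ∀ z : ℕ → X, WUC z → RelWeakCompact (Set.range fun n => Q (∑ i ∈ Finset.range n, z i))

section RelWeakCompactOnWUC

variable {X X' Y Y' : Type*} [NormedAddCommGroup X] [NormedSpace ℝ X]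
  [NormedAddCommGroup X'] [NormedSpace ℝ X'] [NormedAddCommGroup Y] [NormedSpace ℝ Y]
  [NormedAddCommGroup Y'] [NormedSpace ℝ Y'] {Q : X → Y}

theorem RelWeakCompactOnWUC.comp_clm (hQ : RelWeakCompactOnWUC Q) (T : X' →L[ℝ] X) :
    RelWeakCompactOnWUC fun x => Q (T x) := fun z hz => by
  simpa only [map_sum] using hQ _ (hz.map T)

theorem RelWeakCompactOnWUC.clm_comp (hQ : RelWeakCompactOnWUC Q) (T : Y →L[ℝ] Y') :
    RelWeakCompactOnWUC fun x => T (Q x) := fun z hz =>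
  ((hQ z hz).image T).mono (Set.range_comp T _).subset

theorem WUC.cons {z : ℕ → X} (hz : WUC z) (h : X) :
    WUC fun n => Nat.casesOn (motive := fun _ => X) n h z :=
  fun φ => (summable_nat_add_iff 1).1 (hz φ)

theorem RelWeakCompactOnWUC.fwdDiff (hQ : RelWeakCompactOnWUC Q) (h : X) :
    RelWeakCompactOnWUC (fwdDiff h Q) := fun z hz => by
  refine RelWeakCompact.range_sub ((hQ _ (hz.cons h)).mono ?_) (hQ z hz)
  rintro _ ⟨n, rfl⟩
  exact ⟨n + 1, congrArg Q (Finset.sum_range_succ' _ n)⟩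

theorem UCPoly.relWeakCompactOnWUC (hQ : UCPoly Q) : RelWeakCompactOnWUC Q := fun z hz =>
  have ⟨_, hL⟩ := hQ z hz
  .of_isCompact_closure (isCompact_closure_range_of_tendsto hL)

theorem UCPoly.comp_clm (hQ : UCPoly Q) (T : X' →L[ℝ] X) : UCPoly fun x => Q (T x) :=
  fun z hz => by simpa only [map_sum] using hQ _ (hz.map T)

theorem relWeakCompactOnWUC_of_bounded
    (h : ∀ a : ℕ → X, (∃ M : ℝ, ∀ n, ‖a n‖ ≤ M) → RelWeakCompact (Set.range fun n => Q (a n))) :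
    RelWeakCompactOnWUC Q := fun _ hz =>
  h _ (hz.exists_norm_sum_le.imp fun _ hC _ => hC _)

end RelWeakCompactOnWUC

/-- `Q` is a polynomial map of degree at most `k` in the sense of Fréchet: its differences of order
`k + 1` vanish. -/
def IsPolynomialOfDegreeLE {E Y : Type*} [AddCommGroup E] [AddCommGroup Y] : ℕ → (E → Y) → Prop
  | 0, Q => ∀ x y, Q x = Q y
  | k + 1, Q => ∀ h, IsPolynomialOfDegreeLE k (fwdDiff h Q)

section Degree

variable {ι κ R E Y : Type*} [AddCommGroup E] [AddCommGroup Y]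

theorem IsPolynomialOfDegreeLE.sum {k : ℕ} {F : Finset ι} {f : ι → E → Y}
    (hf : ∀ i ∈ F, IsPolynomialOfDegreeLE k (f i)) :
    IsPolynomialOfDegreeLE k (∑ i ∈ F, f i) := by
  induction k generalizing f with
  | zero =>
    intro x y
    simp only [Finset.sum_apply]
    exact Finset.sum_congr rfl fun i hi => hf i hi x y
  | succ k ih =>
    intro h
    rw [fwdDiff_finsetSum]
    exact ih fun i hi => hf i hi h

variable [Semiring R] [Module R E] [Module R Y] [DecidableEq κ]

theorem fwdDiff_map_piecewise (A : MultilinearMap R (fun _ : κ => E) Y) (s : Finset κ) (c : κ → E)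
    (h : E) : fwdDiff h (fun x => A (s.piecewise (fun _ => x) c)) =
      ∑ t ∈ s.powerset.erase s,
        fun x => A (t.piecewise (fun _ => x) (s.piecewise (fun _ => h) c)) := by
  funext x
  have hexpand := A.map_piecewise_add (fun _ => x) (s.piecewise (fun _ => h) c) s
  rw [← Finset.add_sum_erase _ _ (Finset.mem_powerset_self s)] at hexpand
  have hsum : s.piecewise ((fun _ => x) + s.piecewise (fun _ => h) c) (s.piecewise (fun _ => h) c)
      = s.piecewise (fun _ => x + h) c := by
    ext i
    by_cases hi : i ∈ s <;> simp [hi]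
  have hmain : s.piecewise (fun _ => x) (s.piecewise (fun _ => h) c) =
      s.piecewise (fun _ => x) c := by
    ext i
    by_cases hi : i ∈ s <;> simp [hi]
  rw [hsum, hmain] at hexpand
  rw [fwdDiff, hexpand, Finset.sum_apply, add_sub_cancel_left]

theorem isPolynomialOfDegreeLE_map_piecewise (A : MultilinearMap R (fun _ : κ => E) Y) {k : ℕ} :
    ∀ {s : Finset κ}, s.card ≤ k → ∀ c : κ → E,
      IsPolynomialOfDegreeLE k fun x => A (s.piecewise (fun _ => x) c) := by
  induction k with
  | zero =>
    intro s hs c x y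
    obtain rfl : s = ∅ := Finset.card_eq_zero.1 (Nat.le_zero.1 hs)
    simp only [Finset.piecewise_empty]
  | succ k ih =>
    intro s hs c h
    rw [fwdDiff_map_piecewise]
    refine .sum fun t ht => ih ?_ _
    have hts : t ⊂ s := Finset.mem_ssubsets.1 (by simpa [Finset.ssubsets] using ht)
    exact Nat.le_of_lt_succ ((Finset.card_lt_card hts).trans_le hs)

end Degree

/-- `Q` maps sequences with the same bounded coordinatewise limit to sequences with vanishing
difference. -/
def CoordCauchyContinuous {Y : Type*} [NormedAddCommGroup Y] (Q : c0 → Y) : Prop :=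
  ∀ (a b : ℕ → c0) (l : ℕ → ℝ), CoordTendsto a l → CoordTendsto b l →
    Tendsto (fun n => Q (a n) - Q (b n)) atTop (𝓝 0)

section WeakCompactPolynomials

variable {Y : Type*} [NormedAddCommGroup Y] {Q : c0 → Y}

theorem BoundedOnBalls.fwdDiff {E : Type*} [NormedAddCommGroup E] {q : E → Y}
    (hq : BoundedOnBalls q) (h : E) : BoundedOnBalls (fwdDiff h q) := fun R => by
  obtain ⟨C, hC⟩ := hq (R + ‖h‖)
  refine ⟨C + C, fun x hx => norm_sub_le_of_le (hC _ (norm_add_le_of_le hx le_rfl)) (hC _ ?_)⟩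
  exact hx.trans (le_add_of_nonneg_right (norm_nonneg h))

theorem CoordTendsto.exists_strictMono_tendsto [NormedSpace ℝ Y] [CompleteSpace Y] {x : ℕ → c0}
    (hx : CoordTendsto x 0) (hbdd : BoundedOnBalls Q) (hcpt : RelWeakCompactOnWUC Q)
    (hdiff : ∀ h, CoordCauchyContinuous (fwdDiff h Q)) :
    ∃ g : ℕ → ℕ, StrictMono g ∧ Tendsto (fun n => Q (x (g n))) atTop (𝓝 (Q 0)) := by
  obtain ⟨g, hg, hwuc⟩ := hx.exists_strictMono_wuc
  let q : c0 → Y := fun x => Q x - Q 0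
  have hcross : ∀ z, Tendsto (fun n => q (x (g n) + z) - q (x (g n)) - q z) atTop (𝓝 0) := by
    intro z
    have := hdiff z (x ∘ g) 0 0 (hx.comp hg.tendsto_atTop)
      ⟨⟨0, fun _ => norm_zero.le⟩, fun _ => tendsto_const_nhds⟩
    simpa [q, fwdDiff] using this
  obtain ⟨g', hg', hadd⟩ := exists_strictMono_almostAdditive (x := x ∘ g) hcross
  refine ⟨g ∘ g', hg.comp hg', tendsto_sub_nhds_zero_iff.1 ?_⟩
  have hwuc' := hwuc.comp_injective hg'.injective
  have hqbdd : BoundedOnBalls q := fun R => (hbdd R).elim fun C hC =>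
    ⟨C + ‖Q 0‖, fun x hx => norm_sub_le_of_le (hC x hx) le_rfl⟩
  refine (hadd.wuc (sub_self _) hqbdd hwuc').tendsto_zero_of_relWeakCompact fun f hf => ?_
  refine (hadd.comp hf).relWeakCompact_sum (RelWeakCompact.range_sub
    (hcpt _ (hwuc'.comp_injective hf.injective)) (.of_isCompact_closure ?_))
  exact isCompact_closure_range_of_tendsto tendsto_const_nhds

theorem CoordTendsto.tendsto_apply [NormedSpace ℝ Y] [CompleteSpace Y] {x : ℕ → c0}
    (hx : CoordTendsto x 0) (hbdd : BoundedOnBalls Q) (hcpt : RelWeakCompactOnWUC Q)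
    (hdiff : ∀ h, CoordCauchyContinuous (fwdDiff h Q)) :
    Tendsto (fun n => Q (x n)) atTop (𝓝 (Q 0)) :=
  tendsto_of_subseq_tendsto fun _ hu =>
    ((hx.comp hu).exists_strictMono_tendsto hbdd hcpt hdiff).imp fun _ h => h.2

-- `Q (a n) - Q (b n) = Q (a n - b m) - Q (b n - b m) - (D (a n) - D (b n))` with `D` the difference
-- of `Q` in direction `-b m`; the first two terms are close to `Q 0` for large `m` and `n`.
theorem coordCauchyContinuous_of_fwdDiff
    (hnull : ∀ x, CoordTendsto x 0 → Tendsto (fun n => Q (x n)) atTop (𝓝 (Q 0)))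
    (hdiff : ∀ h, CoordCauchyContinuous (fwdDiff h Q)) : CoordCauchyContinuous Q := by
  intro a b l ha hb
  have hlim : ∀ {a}, CoordTendsto a l →
      Tendsto (fun p : ℕ × ℕ => Q (a p.2 - b p.1)) (atTop ×ˢ atTop) (𝓝 (Q 0)) := fun ha =>
    tendsto_of_seq_tendsto fun u hu => hnull _ <| by
      have hsub := (ha.comp hu.snd).sub (hb.comp hu.fst)
      simp only [sub_self] at hsub
      exact hsub
  have hpair := ((hlim ha).sub (hlim hb)).norm
  rw [sub_self, norm_zero] at hpair
  refine NormedAddGroup.tendsto_nhds_zero.2 fun ε hε => ?_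
  obtain ⟨m, hm⟩ := (hpair.eventually_lt_const (half_pos hε)).curry.exists
  have hD := NormedAddGroup.tendsto_nhds_zero.1 (hdiff (-b m) a b l ha hb) _ (half_pos hε)
  filter_upwards [hm, hD] with n hn hDn
  calc ‖Q (a n) - Q (b n)‖ = ‖(Q (a n - b m) - Q (b n - b m)) -
        (fwdDiff (-b m) Q (a n) - fwdDiff (-b m) Q (b n))‖ := by
        simp only [fwdDiff, ← sub_eq_add_neg]
        congr 1
        abel
    _ ≤ ‖Q (a n - b m) - Q (b n - b m)‖ + ‖fwdDiff (-b m) Q (a n) - fwdDiff (-b m) Q (b n)‖ :=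
        norm_sub_le _ _
    _ < ε := by linarith

theorem IsPolynomialOfDegreeLE.coordCauchyContinuous [NormedSpace ℝ Y] [CompleteSpace Y] {k : ℕ}
    (hQ : IsPolynomialOfDegreeLE k Q) (hbdd : BoundedOnBalls Q) (hcpt : RelWeakCompactOnWUC Q) :
    CoordCauchyContinuous Q := by
  induction k generalizing Q with
  | zero =>
    intro a b l _ _
    exact tendsto_const_nhds.congr fun n => (sub_eq_zero.2 (hQ _ _)).symm
  | succ k ih =>
    have hdiff : ∀ h, CoordCauchyContinuous (fwdDiff h Q) := fun h =>
      ih (hQ h) (hbdd.fwdDiff h) (hcpt.fwdDiff h)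
    exact coordCauchyContinuous_of_fwdDiff (fun x hx => hx.tendsto_apply hbdd hcpt hdiff) hdiff

end WeakCompactPolynomials

theorem isCompact_closure_of_exists_subseq {Y : Type*} [PseudoMetricSpace Y] {s : Set Y}
    (h : ∀ y : ℕ → Y, (∀ n, y n ∈ s) → ∃ φ : ℕ → ℕ, StrictMono φ ∧
      ∃ L, Tendsto (y ∘ φ) atTop (𝓝 L)) : IsCompact (closure s) := by
  refine IsSeqCompact.isCompact fun y hy => ?_
  choose z hzs hdist using fun n =>
    Metric.mem_closure_iff.1 (hy n) _ (Nat.one_div_pos_of_nat (n := n))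
  obtain ⟨φ, hφ, L, hL⟩ := h z hzs
  refine ⟨L, mem_closure_of_tendsto hL (.of_forall fun n => hzs (φ n)), φ, hφ, ?_⟩
  refine (tendsto_iff_of_dist ?_).2 hL
  exact squeeze_zero (fun _ => dist_nonneg) (fun n => (hdist (φ n)).le)
    (tendsto_one_div_add_atTop_nhds_zero_nat.comp hφ.tendsto_atTop)

namespace CoordCauchyContinuous

variable {Y : Type*} [NormedAddCommGroup Y] [NormedSpace ℝ Y] {Q : c0 → Y}

theorem exists_tendsto (hQ : CoordCauchyContinuous Q) (hcpt : RelWeakCompactOnWUC Q) {a : ℕ → c0}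
    {l : ℕ → ℝ} (ha : CoordTendsto a l) : ∃ L, Tendsto (fun n => Q (a n)) atTop (𝓝 L) := by
  obtain ⟨C, hC⟩ := ha.exists_abs_le
  let s : ℕ → c0 := fun n => ∑ i ∈ Finset.range n, l i • e i
  have hs : CoordTendsto s l := coordTendsto_sum_smul_e hC
  have hcauchy : CauchySeq fun n => Q (s n) :=
    cauchySeq_iff_tendsto_dist_atTop_0.2 <| tendsto_of_seq_tendsto fun u hu => by
      rw [← prod_atTop_atTop_eq] at hu
      simpa [dist_eq_norm, Function.comp_def] using
        (hQ _ _ l (hs.comp hu.fst) (hs.comp hu.snd)).norm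
  obtain ⟨L, hL⟩ :=
    exists_tendsto_of_cauchySeq_of_relWeakCompact hcauchy (hcpt _ (wuc_smul_e hC))
  exact ⟨L, by simpa using (hQ a s l ha hs).add hL⟩

theorem ucPoly (hQ : CoordCauchyContinuous Q) (hcpt : RelWeakCompactOnWUC Q) : UCPoly Q :=
  fun _ hz => hQ.exists_tendsto hcpt hz.coordTendsto_sum_range

theorem isCompact_closure_image (hQ : CoordCauchyContinuous Q) (hcpt : RelWeakCompactOnWUC Q)
    {s : Set c0} (hs : Bornology.IsBounded s) : IsCompact (closure (Q '' s)) := by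
  obtain ⟨M, hM⟩ := isBounded_iff_forall_norm_le.1 hs
  refine isCompact_closure_of_exists_subseq fun y hy => ?_
  choose a has hay using hy
  obtain ⟨φ, hφ, l, hl⟩ := exists_coordTendsto_subseq ⟨M, fun n => hM _ (has n)⟩
  obtain rfl : Q ∘ a = y := funext hay
  exact ⟨φ, hφ, hQ.exists_tendsto hcpt hl⟩

end CoordCauchyContinuous

/-- `P` is a continuous `k`-homogeneous polynomial: the restriction to the diagonal of a continuous
`k`-linear map. -/
def IsHomogeneousPolynomial {X Y : Type*} [NormedAddCommGroup X] [NormedSpace ℝ X]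
    [NormedAddCommGroup Y] [NormedSpace ℝ Y] (k : ℕ) (P : X → Y) : Prop :=
  ∃ A : ContinuousMultilinearMap ℝ (fun _ : Fin k => X) Y, P = fun x => A fun _ => x

section HomogeneousPolynomials

variable {X X' Y Y' : Type*} [NormedAddCommGroup X] [NormedSpace ℝ X]
  [NormedAddCommGroup X'] [NormedSpace ℝ X'] [NormedAddCommGroup Y] [NormedSpace ℝ Y]
  [NormedAddCommGroup Y'] [NormedSpace ℝ Y'] {k : ℕ}

theorem isHomogeneousPolynomial_clm (T : X →L[ℝ] Y) : IsHomogeneousPolynomial 1 T :=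
  ⟨ContinuousMultilinearMap.ofSubsingleton ℝ X Y 0 T, rfl⟩

namespace IsHomogeneousPolynomial

variable {P : X → Y} {Q : c0 → Y}

theorem comp_clm (hP : IsHomogeneousPolynomial k P) (T : X' →L[ℝ] X) :
    IsHomogeneousPolynomial k fun x => P (T x) := by
  obtain ⟨A, rfl⟩ := hP
  exact ⟨A.compContinuousLinearMap fun _ => T, rfl⟩

theorem clm_comp (hP : IsHomogeneousPolynomial k P) (T : Y →L[ℝ] Y') :
    IsHomogeneousPolynomial k fun x => T (P x) := by
  obtain ⟨A, rfl⟩ := hP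
  exact ⟨T.compContinuousMultilinearMap A, rfl⟩

theorem map_smul (hP : IsHomogeneousPolynomial k P) (r : ℝ) (x : X) : P (r • x) = r ^ k • P x := by
  obtain ⟨A, rfl⟩ := hP
  simpa using A.map_smul_univ (fun _ => r) fun _ => x

theorem isPolynomialOfDegreeLE (hP : IsHomogeneousPolynomial k P) :
    IsPolynomialOfDegreeLE k P := by
  obtain ⟨A, rfl⟩ := hP
  simpa using isPolynomialOfDegreeLE_map_piecewise A.toMultilinearMap
    (s := Finset.univ) (Finset.card_fin k).le 0

theorem boundedOnBalls (hP : IsHomogeneousPolynomial k P) : BoundedOnBalls P := by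
  obtain ⟨A, rfl⟩ := hP
  exact fun R => ⟨‖A‖ * ∏ _ : Fin k, R, fun x hx => A.le_opNorm_mul_prod_of_le fun _ => hx⟩

theorem isCompact_closure_image (hP : IsHomogeneousPolynomial k P) (hcpt : CompactMap P)
    {s : Set X} (hs : Bornology.IsBounded s) : IsCompact (closure (P '' s)) := by
  obtain ⟨r, hr, hrs⟩ := hs.exists_pos_norm_le
  refine (IsCompact.smul (r ^ k) hcpt).closure_of_subset ?_
  rintro _ ⟨x, hx, rfl⟩
  refine ⟨P (r⁻¹ • x), subset_closure ⟨_, ?_, rfl⟩, ?_⟩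
  · rw [mem_closedBall_zero_iff, norm_smul, norm_inv, Real.norm_of_nonneg hr.le,
      inv_mul_le_one₀ hr]
    exact hrs x hx
  · simp only [← hP.map_smul, smul_inv_smul₀ hr.ne']

theorem relWeakCompactOnWUC_of_compactMap (hP : IsHomogeneousPolynomial k P)
    (hcpt : CompactMap P) : RelWeakCompactOnWUC P :=
  relWeakCompactOnWUC_of_bounded fun a ⟨_, hM⟩ => .of_isCompact_closure <| by
    rw [Set.range_comp' P a]
    exact hP.isCompact_closure_image hcpt
      (isBounded_iff_forall_norm_le.2 ⟨_, Set.forall_mem_range.2 hM⟩)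

theorem coordCauchyContinuous (hQ : IsHomogeneousPolynomial k Q) (hcpt : RelWeakCompactOnWUC Q) :
    CoordCauchyContinuous Q := fun a b l ha hb => by
  let ι : Y →L[ℝ] UniformSpace.Completion Y := UniformSpace.Completion.toComplL
  have hιQ := hQ.clm_comp ι
  have hι := hιQ.isPolynomialOfDegreeLE.coordCauchyContinuous hιQ.boundedOnBalls
    (hcpt.clm_comp ι) a b l ha hb
  refine squeeze_zero_norm (fun n => ?_) (tendsto_zero_iff_norm_tendsto_zero.1 hι)
  rw [← map_sub]
  exact (UniformSpace.Completion.norm_coe _).ge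

theorem ucPoly_of_relWeakCompactOnWUC (hQ : IsHomogeneousPolynomial k Q)
    (hcpt : RelWeakCompactOnWUC Q) : UCPoly Q :=
  (hQ.coordCauchyContinuous hcpt).ucPoly hcpt

theorem isCompact_closure_image_of_relWeakCompactOnWUC (hQ : IsHomogeneousPolynomial k Q)
    (hcpt : RelWeakCompactOnWUC Q) {s : Set c0} (hs : Bornology.IsBounded s) :
    IsCompact (closure (Q '' s)) :=
  (hQ.coordCauchyContinuous hcpt).isCompact_closure_image hcpt hs

theorem relWeakCompactOnWUC_iff_isCompact (hQ : IsHomogeneousPolynomial k Q) :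
    RelWeakCompactOnWUC Q ↔ ∀ a : ℕ → c0, (∃ M : ℝ, ∀ n, ‖a n‖ ≤ M) →
      IsCompact (closure (Set.range fun n => Q (a n))) := by
  refine ⟨fun hcpt a ⟨M, hM⟩ => ?_,
    fun h => relWeakCompactOnWUC_of_bounded fun a ha => .of_isCompact_closure (h a ha)⟩
  rw [Set.range_comp' Q a]
  exact hQ.isCompact_closure_image_of_relWeakCompactOnWUC hcpt
    (isBounded_iff_forall_norm_le.2 ⟨M, Set.forall_mem_range.2 hM⟩)

theorem relWeakCompactOnWUC_iff_relWeakCompact (hQ : IsHomogeneousPolynomial k Q) :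
    RelWeakCompactOnWUC Q ↔ ∀ a : ℕ → c0, (∃ M : ℝ, ∀ n, ‖a n‖ ≤ M) →
      RelWeakCompact (Set.range fun n => Q (a n)) :=
  ⟨fun hcpt a ha => .of_isCompact_closure (hQ.relWeakCompactOnWUC_iff_isCompact.1 hcpt a ha),
    relWeakCompactOnWUC_of_bounded⟩

end IsHomogeneousPolynomial

theorem UCOp.compactMap {T : c0 →L[ℝ] X} (hT : UCOp T) : CompactMap T := by
  refine (isHomogeneousPolynomial_clm T).isCompact_closure_image_of_relWeakCompactOnWUC
    (UCPoly.relWeakCompactOnWUC fun z hz => ?_) isBounded_closedBall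
  exact ⟨_, by simpa only [map_sum] using (hT z hz).hasSum.tendsto_sum_nat⟩

end HomogeneousPolynomials

theorem c0.norm_sum_range_smul_e (n : ℕ) (a : ℕ → ℝ) :
    ‖∑ i ∈ Finset.range n, a i • e i‖ = ⨆ i : Fin n, |a i| := by
  refine le_antisymm (norm_sum_smul_e_le (Real.iSup_nonneg fun _ => abs_nonneg _) fun i hi => ?_)
    (Real.iSup_le (fun i => ?_) (norm_nonneg _))
  · exact le_ciSup (f := fun i : Fin n => |a i|) (Set.finite_range _).bddAbove
      ⟨i, Finset.mem_range.1 hi⟩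
  · refine le_trans (le_of_eq ?_) (abs_apply_le_norm _ i)
    rw [sum_smul_e_apply, if_pos (Finset.mem_range.2 i.2)]

section EquivC0Basis

variable {X : Type*} [NormedAddCommGroup X] [NormedSpace ℝ X] {x : ℕ → X}

theorem sum_ite_smul_of_subset {ι R E : Type*} [DecidableEq ι] [Semiring R] [AddCommMonoid E]
    [Module R E] {F G : Finset ι} (h : F ⊆ G) (v : ι → E) :
    ∑ i ∈ G, (if i ∈ F then (1 : R) else 0) • v i = ∑ i ∈ F, v i := by
  simp only [ite_smul, one_smul, zero_smul, Finset.sum_ite_mem, Finset.inter_eq_right.2 h]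

theorem IsEquivC0Basis.wuc (hx : IsEquivC0Basis x) : WUC x := by
  obtain ⟨c, C, hc, hcC, h⟩ := hx
  refine wuc_of_norm_sum_le (C := C) fun F => ?_
  obtain ⟨n, hn⟩ := F.exists_nat_subset_range
  let χ : ℕ → ℝ := fun i => if i ∈ F then 1 else 0
  have hle := (h n χ).2
  rw [← c0.norm_sum_range_smul_e, sum_ite_smul_of_subset hn, sum_ite_smul_of_subset hn] at hle
  exact hle.trans (mul_le_of_le_one_right (hc.le.trans hcC) (c0.norm_sum_e_le_one F))

theorem IsEquivC0Basis.isC0Embedding [CompleteSpace X] (hx : IsEquivC0Basis x) :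
    IsC0Embedding hx.wuc.toCLM := by
  obtain ⟨c, C, hc, -, h⟩ := id hx
  refine ⟨c, hc, fun a => ?_⟩
  have ha := (c0.hasSum_smul_e a).tendsto_sum_nat
  refine le_of_tendsto_of_tendsto' (ha.norm.const_mul c)
    ((hx.wuc.toCLM.continuous.tendsto a).comp ha).norm fun n => ?_
  rw [c0.norm_sum_range_smul_e]
  simpa using (h n a).1

theorem IsC0Embedding.isEquivC0Basis {j : c0 →L[ℝ] X} (hj : IsC0Embedding j) :
    IsEquivC0Basis fun n => j (e n) := by
  obtain ⟨c, hc, hcj⟩ := hj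
  refine ⟨c, max c ‖j‖, hc, le_max_left _ _, fun n a => ?_⟩
  have hsum : ∑ i ∈ Finset.range n, a i • j (e i) = j (∑ i ∈ Finset.range n, a i • e i) := by
    simp only [map_sum, map_smul]
  rw [hsum, ← c0.norm_sum_range_smul_e]
  exact ⟨hcj _, j.le_of_opNorm_le (le_max_right _ _) _⟩

theorem IsC0Embedding.exists_clm_range_rightInverse [CompleteSpace X] {j : c0 →L[ℝ] X}
    (hj : IsC0Embedding j) : ∃ R : j.range →L[ℝ] c0, ∀ m, j (R m) = m := by
  let U := j.equivRange hj.isClosedEmbedding.injective hj.isClosedEmbedding.isClosed_range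
  exact ⟨U.symm.toContinuousLinearMap, fun m => congrArg Subtype.val (U.apply_symm_apply m)⟩

end EquivC0Basis

/-- `P` detects the copies of `c₀` in `X`: its restriction to such a copy never maps all w.u.C.
series to relatively weakly compact sets. For polynomials this is the common content of the
characterizations of Orlicz–Pettis polynomials. -/
def DetectsC0 {X Y : Type*} [NormedAddCommGroup X] [NormedSpace ℝ X]
    [NormedAddCommGroup Y] [NormedSpace ℝ Y] (P : X → Y) : Prop :=
  ∀ j : c0 →L[ℝ] X, IsC0Embedding j → ¬ RelWeakCompactOnWUC fun a => P (j a)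

section DetectsC0

variable {X : Type u} {Y : Type v} [NormedAddCommGroup X] [NormedSpace ℝ X]
  [NormedAddCommGroup Y] [NormedSpace ℝ Y] {P : X → Y} {k : ℕ}

theorem DetectsC0.summable [CompleteSpace X] {Z : Type*} [NormedAddCommGroup Z] [NormedSpace ℝ Z]
    [CompleteSpace Z] (hP : DetectsC0 P) {T : Z →L[ℝ] X}
    (hT : RelWeakCompactOnWUC fun z => P (T z)) {z : ℕ → Z} (hz : WUC z) :
    Summable fun n => T (z n) := by
  by_contra hsum
  obtain ⟨S, hS⟩ := exists_isC0Embedding_comp_of_not_summable (L := T.comp hz.toCLM)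
    (by simpa using hsum)
  exact hP _ hS (hT.comp_clm (hz.toCLM.comp S))

theorem detectsC0_iff_forall_wuc [CompleteSpace X] :
    DetectsC0 P ↔ ∀ x : ℕ → X, WUC x →
      RelWeakCompactOnWUC (fun a : c0 => P (∑' i, a i • x i)) → Summable x := by
  refine ⟨fun hP x hx hcpt => ?_, fun h j hj hcpt => hj.not_summable ?_⟩
  · simpa only [hx.toCLM_e] using
      hP.summable (T := hx.toCLM) (by simpa only [hx.toCLM_apply] using hcpt) wuc_e
  · exact h _ (wuc_e.map j) (by simpa only [← c0.map_eq_tsum] using hcpt)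

theorem detectsC0_iff_forall_isEquivC0Basis [CompleteSpace X] :
    DetectsC0 P ↔ ∀ x : ℕ → X, IsEquivC0Basis x →
      ¬ RelWeakCompactOnWUC fun a : c0 => P (∑' i, a i • x i) := by
  refine ⟨fun hP x hx hcpt => ?_, fun h j hj hcpt => ?_⟩
  · exact hP _ hx.isC0Embedding (by simpa only [hx.wuc.toCLM_apply] using hcpt)
  · exact h _ hj.isEquivC0Basis (by simpa only [← c0.map_eq_tsum] using hcpt)

namespace IsHomogeneousPolynomial

theorem detectsC0_iff_forall_ucOp [CompleteSpace X] (hP : IsHomogeneousPolynomial k P) :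
    DetectsC0 P ↔ ∀ (Z : Type w) [NormedAddCommGroup Z] [NormedSpace ℝ Z] [CompleteSpace Z]
      (T : Z →L[ℝ] X), UCPoly (fun z => P (T z)) → UCOp T := by
  refine ⟨fun h Z _ _ _ T hT z hz => h.summable hT.relWeakCompactOnWUC hz,
    fun h j hj hcpt => hj.not_summable ?_⟩
  let U : ULift.{w, 0} c0 ≃L[ℝ] c0 := ContinuousLinearEquiv.ulift
  have hUC := (hP.comp_clm j).ucPoly_of_relWeakCompactOnWUC hcpt
  simpa using h (ULift.{w, 0} c0) (j.comp U.toContinuousLinearMap)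
    (hUC.comp_clm U.toContinuousLinearMap) _ (wuc_e.map U.symm.toContinuousLinearMap)

theorem detectsC0_iff_forall_compactMap [CompleteSpace X] (hP : IsHomogeneousPolynomial k P) :
    DetectsC0 P ↔ ∀ T : c0 →L[ℝ] X, CompactMap (fun z => P (T z)) → CompactMap T := by
  refine ⟨fun h T hT => UCOp.compactMap fun z hz =>
      h.summable ((hP.comp_clm T).relWeakCompactOnWUC_of_compactMap hT) hz,
    fun h j hj hcpt => hj.not_compactMap (h j ?_)⟩
  exact (hP.comp_clm j).isCompact_closure_image_of_relWeakCompactOnWUC hcpt isBounded_closedBall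

theorem detectsC0_iff_forall_not_ucPoly [CompleteSpace X] (hP : IsHomogeneousPolynomial k P) :
    DetectsC0 P ↔ ∀ M : Submodule ℝ X, IsClosed (M : Set X) →
      (∃ j : c0 →L[ℝ] X, IsC0Embedding j ∧ ∀ z, j z ∈ M) →
      ¬ UCPoly fun m : M => P m := by
  refine ⟨fun h M _ ⟨j, hj, hjM⟩ hUC =>
      h j hj (hUC.relWeakCompactOnWUC.comp_clm (j.codRestrict M hjM)), fun h j hj hcpt => ?_⟩
  obtain ⟨R, hR⟩ := hj.exists_clm_range_rightInverse
  refine h j.range hj.isClosedEmbedding.isClosed_range ⟨j, hj, fun z => ⟨z, rfl⟩⟩ ?_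
  simpa only [hR] using ((hP.comp_clm j).ucPoly_of_relWeakCompactOnWUC hcpt).comp_clm R

theorem detectsC0_iff_forall_not_compactMap [CompleteSpace X] (hP : IsHomogeneousPolynomial k P) :
    DetectsC0 P ↔ ∀ M : Submodule ℝ X, IsClosed (M : Set X) →
      (∃ j : c0 →L[ℝ] X, IsC0Embedding j ∧ Set.range j = M) →
      ¬ CompactMap fun m : M => P m := by
  refine ⟨fun h M _ ⟨j, hj, hjM⟩ hK => h j hj ?_, fun h j hj hcpt => ?_⟩
  · exact ((hP.comp_clm M.subtypeL).relWeakCompactOnWUC_of_compactMap hK).comp_clm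
      (j.codRestrict M fun z => hjM.subset ⟨z, rfl⟩)
  obtain ⟨R, hR⟩ := hj.exists_clm_range_rightInverse
  refine h j.range hj.isClosedEmbedding.isClosed_range ⟨j, hj, rfl⟩ ?_
  have hK := (hP.comp_clm j).isCompact_closure_image_of_relWeakCompactOnWUC hcpt
    (R.lipschitz.isBounded_image (isBounded_closedBall (x := 0) (r := 1)))
  simpa only [CompactMap, Set.image_image, hR] using hK

end IsHomogeneousPolynomial

end DetectsC0

theorem orlicz_pettis_tfae_general {X : Type u} {Y : Type v}
    [NormedAddCommGroup X] [NormedSpace ℝ X] [CompleteSpace X]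
    [NormedAddCommGroup Y] [NormedSpace ℝ Y]
    {k : ℕ} {P : X → Y} (hP : IsHomogeneousPolynomial k P) :
    List.TFAE
      [ ∀ x : ℕ → X, WUC x →
          (∀ a : ℕ → c0, (∃ M : ℝ, ∀ n, ‖a n‖ ≤ M) →
            RelWeakCompact (Set.range fun n => P (∑' i, a n i • x i))) →
          Summable x,
        ∀ x : ℕ → X, WUC x →
          (∀ a : ℕ → c0, (∃ M : ℝ, ∀ n, ‖a n‖ ≤ M) →
            IsCompact (closure (Set.range fun n => P (∑' i, a n i • x i)))) →
          Summable x,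
        ∀ x : ℕ → X, IsEquivC0Basis x →
          ∃ a : ℕ → c0, (∃ M : ℝ, ∀ n, ‖a n‖ ≤ M) ∧
            ¬ RelWeakCompact (Set.range fun n => P (∑' i, a n i • x i)),
        ∀ x : ℕ → X, IsEquivC0Basis x →
          ∃ a : ℕ → c0, (∃ M : ℝ, ∀ n, ‖a n‖ ≤ M) ∧
            ¬ IsCompact (closure (Set.range fun n => P (∑' i, a n i • x i))),
        ∀ (Z : Type w) [NormedAddCommGroup Z] [NormedSpace ℝ Z] [CompleteSpace Z]
          (T : Z →L[ℝ] X), UCPoly (fun z => P (T z)) → UCOp ⇑T,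
        ∀ T : c0 →L[ℝ] X, CompactMap (fun z => P (T z)) → CompactMap ⇑T,
        ∀ M : Submodule ℝ X, IsClosed (M : Set X) →
          (∃ j : c0 →L[ℝ] X, IsC0Embedding j ∧ ∀ z, j z ∈ M) →
          ¬ UCPoly (fun m : M => P (m : X)),
        ∀ M : Submodule ℝ X, IsClosed (M : Set X) →
          (∃ j : c0 →L[ℝ] X, IsC0Embedding j ∧ Set.range ⇑j = (M : Set X)) →
          ¬ CompactMap (fun m : M => P (m : X)) ] := by
  have hQ : ∀ x : ℕ → X, WUC x →
      IsHomogeneousPolynomial k fun a : c0 => P (∑' i, a i • x i) := fun x hx => by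
    simpa only [hx.toCLM_apply] using hP.comp_clm hx.toCLM
  refine List.tfae_of_forall (DetectsC0 P) _ ?_
  simp only [List.forall_mem_cons, List.not_mem_nil, false_imp_iff, implies_true, and_true]
  refine ⟨.symm ?_, .symm ?_, .symm ?_, .symm ?_, hP.detectsC0_iff_forall_ucOp.symm,
    hP.detectsC0_iff_forall_compactMap.symm, hP.detectsC0_iff_forall_not_ucPoly.symm,
    hP.detectsC0_iff_forall_not_compactMap.symm⟩
  · exact detectsC0_iff_forall_wuc.trans <| forall₂_congr fun x hx =>
      imp_congr_left (hQ x hx).relWeakCompactOnWUC_iff_relWeakCompact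
  · exact detectsC0_iff_forall_wuc.trans <| forall₂_congr fun x hx =>
      imp_congr_left (hQ x hx).relWeakCompactOnWUC_iff_isCompact
  · refine detectsC0_iff_forall_isEquivC0Basis.trans <| forall₂_congr fun x hx => ?_
    rw [(hQ x hx.wuc).relWeakCompactOnWUC_iff_relWeakCompact]
    simp only [not_forall, exists_prop]
  · refine detectsC0_iff_forall_isEquivC0Basis.trans <| forall₂_congr fun x hx => ?_
    rw [(hQ x hx.wuc).relWeakCompactOnWUC_iff_isCompact]
    simp only [not_forall, exists_prop]

/-- Theorem (characterizations of Orlicz–Pettis polynomials). -/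
theorem orlicz_pettis_tfae {X : Type u} {Y : Type v}
    [NormedAddCommGroup X] [NormedSpace ℝ X] [CompleteSpace X]
    [NormedAddCommGroup Y] [NormedSpace ℝ Y] [CompleteSpace Y]
    (k : ℕ) (hk : 1 ≤ k) (A : ContinuousMultilinearMap ℝ (fun _ : Fin k => X) Y)
    (P : X → Y) (hP : P = fun x => A fun _ => x) :
    List.TFAE
      [ -- (A)
        ∀ x : ℕ → X, WUC x →
          (∀ a : ℕ → c0, (∃ M : ℝ, ∀ n, ‖a n‖ ≤ M) →
            RelWeakCompact (Set.range fun n => P (∑' i, a n i • x i))) →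
          Summable x,
        -- (B)
        ∀ x : ℕ → X, WUC x →
          (∀ a : ℕ → c0, (∃ M : ℝ, ∀ n, ‖a n‖ ≤ M) →
            IsCompact (closure (Set.range fun n => P (∑' i, a n i • x i)))) →
          Summable x,
        -- (C)
        ∀ x : ℕ → X, IsEquivC0Basis x →
          ∃ a : ℕ → c0, (∃ M : ℝ, ∀ n, ‖a n‖ ≤ M) ∧
            ¬ RelWeakCompact (Set.range fun n => P (∑' i, a n i • x i)),
        -- (D)
        ∀ x : ℕ → X, IsEquivC0Basis x →
          ∃ a : ℕ → c0, (∃ M : ℝ, ∀ n, ‖a n‖ ≤ M) ∧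
            ¬ IsCompact (closure (Set.range fun n => P (∑' i, a n i • x i))),
        -- (E)
        ∀ (Z : Type w) [NormedAddCommGroup Z] [NormedSpace ℝ Z] [CompleteSpace Z]
          (T : Z →L[ℝ] X), UCPoly (fun z => P (T z)) → UCOp ⇑T,
        -- (F)
        ∀ T : c0 →L[ℝ] X, CompactMap (fun z => P (T z)) → CompactMap ⇑T,
        -- (G)
        ∀ M : Submodule ℝ X, IsClosed (M : Set X) →
          (∃ j : c0 →L[ℝ] X, (∃ c : ℝ, 0 < c ∧ ∀ z, c * ‖z‖ ≤ ‖j z‖) ∧ ∀ z, j z ∈ M) →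
          ¬ UCPoly (fun m : M => P (m : X)),
        -- (H)
        ∀ M : Submodule ℝ X, IsClosed (M : Set X) →
          (∃ j : c0 →L[ℝ] X, (∃ c : ℝ, 0 < c ∧ ∀ z, c * ‖z‖ ≤ ‖j z‖) ∧
            Set.range ⇑j = (M : Set X)) →
          ¬ CompactMap (fun m : M => P (m : X)) ] :=
  orlicz_pettis_tfae_general ⟨A, hP⟩
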